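/- Let T1, T2, T3 be positive integers with gcd(T1,T2,T3) = 1 and let D = T1+T2+T3−d12−d23−d13 be the degree of P_3. Then P_3 is palindromic: its coefficients satisfy c_k = c_{D−k} for every integer k with 0 ≤ k ≤ D. -/

import Mathlib

open Polynomial

lemma aux_deg (n : ℕ) : (1 - X ^ n : ℤ[X]).natDegree = n := by
  rw [← neg_sub, natDegree_neg]
  exact natDegree_X_pow_sub_C (R := ℤ) (r := 1)

lemma aux_ne (n : ℕ) (hn : 0 < n) : (1 - X ^ n : ℤ[X]) ≠ 0 := by
  intro h
  have := aux_deg n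
  rw [h, natDegree_zero] at this
  omega

lemma aux_rev (n : ℕ) : (1 - X ^ n : ℤ[X]).reverse = -(1 - X ^ n) := by
  unfold reverse
  rw [aux_deg, reflect_sub, reflect_one, reflect_monomial,
    revAt_le le_rfl]
  simp

/-- The quotient polynomial `P_3` is palindromic: with
`D = T1+T2+T3-d12-d23-d13` its degree, `c_k = c_{D-k}` for all `0 ≤ k ≤ D`. -/
theorem stmt_13 (T1 T2 T3 : ℕ) (h1 : 0 < T1) (h2 : 0 < T2) (h3 : 0 < T3)
    (hgcd : Nat.gcd (Nat.gcd T1 T2) T3 = 1)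
    (d12 d23 d13 : ℕ) (hd12 : d12 = Nat.gcd T1 T2) (hd23 : d23 = Nat.gcd T2 T3)
    (hd13 : d13 = Nat.gcd T1 T3)
    (P : ℤ[X])
    (hP : (1 - X ^ d12) * (1 - X ^ d23) * (1 - X ^ d13) * P =
      (1 - X ^ T1) * (1 - X ^ T2) * (1 - X ^ T3))
    (D : ℕ) (hD : D = T1 + T2 + T3 - d12 - d23 - d13) :
    ∀ k ≤ D, P.coeff k = P.coeff (D - k) := by
  have p12 : 0 < d12 := hd12 ▸ Nat.gcd_pos_of_pos_left _ h1
  have p23 : 0 < d23 := hd23 ▸ Nat.gcd_pos_of_pos_left _ h2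
  have p13 : 0 < d13 := hd13 ▸ Nat.gcd_pos_of_pos_left _ h1
  have n12 := aux_ne _ p12
  have n23 := aux_ne _ p23
  have n13 := aux_ne _ p13
  have m1 := aux_ne _ h1
  have m2 := aux_ne _ h2
  have m3 := aux_ne _ h3
  have hP0 : P ≠ 0 := by
    rintro rfl
    rw [mul_zero] at hP
    exact mul_ne_zero (mul_ne_zero m1 m2) m3 hP.symm
  have hdeg := congrArg natDegree hP
  rw [natDegree_mul (mul_ne_zero (mul_ne_zero n12 n23) n13) hP0,
    natDegree_mul (mul_ne_zero n12 n23) n13, natDegree_mul n12 n23,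
    natDegree_mul (mul_ne_zero m1 m2) m3, natDegree_mul m1 m2] at hdeg
  simp only [aux_deg] at hdeg
  have hPD : P.natDegree = D := by omega
  have hr := congrArg reverse hP
  simp only [reverse_mul_of_domain, aux_rev] at hr
  have hrev : P.reverse = P := by
    apply mul_left_cancel₀ (mul_ne_zero (mul_ne_zero n12 n23) n13)
    rw [hP]
    linear_combination -hr
  intro k hk
  have := coeff_reverse P k
  rwa [hrev, hPD, revAt_le hk] at this
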